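/- Let L be a linear functional on the real polynomial ring in n variables satisfying L(x^α) ≥ 0 for all multi-indices α, L(1) ≤ 1, and L( p·(1 − x_1 − ... − x_n) ) = 0 for every polynomial p. Then there exists a positive finite Borel measure μ supported on the simplex Δ_{n−1} with μ(Δ_{n−1}) ≤ 1 such that L(f) = ∫_{Δ_{n−1}} f(x) dμ(x) for every polynomial f. -/

import Mathlib

open MeasureTheory MvPolynomial

/-!
Put `m α = L (x ^ α)`. The hypotheses say that `m` is nonnegative and that
`m α = ∑ i, m (α + eᵢ)`. The functions `m` of this kind with `m 0 = 1` form a compact convex set.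
At an extreme point, splitting `m` into the shift `m (· + eᵢ)` and the remaining shifts forces
`m (α + eᵢ) = m eᵢ * m α`, so `m α = x ^ α` for the point `x = (m eᵢ)ᵢ` of the simplex. On the other
hand the moment functions of probability measures on the simplex form a convex set, which is compact
because the space of these measures is, and which contains all `α ↦ x ^ α`. By the Krein-Milman
theorem every normalized `m` is such a moment function.
-/

section MomentSet

variable {X κ : Type*} [TopologicalSpace X] [MeasurableSpace X]

/-- The vectors of generalized moments `(∫ F k dμ)ₖ` of the probability measures `μ` on `X`, for a
family `F` of continuous functions. -/
def momentSet (F : κ → C(X, ℝ)) : Set (κ → ℝ) :=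
  Set.range fun (μ : ProbabilityMeasure X) k => ∫ x, F k x ∂μ

theorem eval_mem_momentSet [OpensMeasurableSpace X] (F : κ → C(X, ℝ)) (x : X) :
    (fun k => F k x) ∈ momentSet F :=
  ⟨⟨Measure.dirac x, inferInstance⟩, funext fun k =>
    integral_dirac' _ x (F k).continuous.stronglyMeasurable⟩

variable [CompactSpace X]

theorem isCompact_momentSet [T2Space X] [BorelSpace X] (F : κ → C(X, ℝ)) :
    IsCompact (momentSet F) :=
  isCompact_range <| continuous_pi fun k =>
    ProbabilityMeasure.continuous_integral_continuousMap (F k)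

theorem convex_momentSet [OpensMeasurableSpace X] (F : κ → C(X, ℝ)) : Convex ℝ (momentSet F) := by
  rintro _ ⟨μ, rfl⟩ _ ⟨ν, rfl⟩ a b ha hb hab
  have hprob : IsProbabilityMeasure
      (ENNReal.ofReal a • (μ : Measure X) + ENNReal.ofReal b • (ν : Measure X)) :=
    ⟨by simp [← ENNReal.ofReal_add ha hb, hab]⟩
  have integrable (ρ : Measure X) [IsFiniteMeasure ρ] (k : κ) : Integrable (F k) ρ :=
    (F k).continuous.integrable_of_hasCompactSupport (.of_compactSpace _)
  refine ⟨⟨_, hprob⟩, funext fun k => ?_⟩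
  simp only [ProbabilityMeasure.coe_mk, Pi.add_apply, Pi.smul_apply, smul_eq_mul]
  rw [integral_add_measure ((integrable _ k).smul_measure ENNReal.ofReal_ne_top)
      ((integrable _ k).smul_measure ENNReal.ofReal_ne_top),
    integral_smul_measure, integral_smul_measure, ENNReal.toReal_ofReal ha,
    ENNReal.toReal_ofReal hb, smul_eq_mul, smul_eq_mul]

theorem subset_momentSet_of_extremePoints_subset_range [T2Space X] [BorelSpace X]
    (F : κ → C(X, ℝ)) {K : Set (κ → ℝ)} (hK : IsCompact K) (hconv : Convex ℝ K)
    (hext : K.extremePoints ℝ ⊆ Set.range fun x k => F k x) : K ⊆ momentSet F := by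
  rw [← closure_convexHull_extremePoints hK hconv]
  refine closure_minimal (convexHull_min (hext.trans ?_) (convex_momentSet F))
    (isCompact_momentSet F).isClosed
  rintro _ ⟨x, rfl⟩
  exact eval_mem_momentSet F x

end MomentSet

theorem finsupp_nat_induction {ι : Type*} {p : (ι →₀ ℕ) → Prop} (zero : p 0)
    (add_single : ∀ α i, p α → p (α + Finsupp.single i 1)) (α : ι →₀ ℕ) : p α := by
  suffices ∀ β, p β → p (β + α) by simpa using this 0 zero
  induction α using Finsupp.induction_linear with
  | zero => simp
  | add α α' hα hα' => exact fun β hβ => add_assoc β α α' ▸ hα' _ (hα β hβ)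
  | single i k =>
    induction k with
    | zero => simp
    | succ k ih =>
      intro β hβ
      rw [Finsupp.single_add, ← add_assoc]
      exact add_single _ i (ih β hβ)

/-- Nonnegative harmonic functions on the generalized Pascal graph `ι →₀ ℕ`, whose edges are
`α → α + eᵢ`: the functions `α ↦ L (x ^ α)` for the linear functionals `L` that are nonnegative on
monomials and vanish on the ideal generated by `1 - ∑ i, xᵢ`. -/
structure IsNonnegHarmonic {ι : Type*} [Fintype ι] (m : (ι →₀ ℕ) → ℝ) : Prop where
  nonneg : ∀ α, 0 ≤ m α
  sum_add_single : ∀ α, ∑ i, m (α + Finsupp.single i 1) = m α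

namespace IsNonnegHarmonic

variable {ι : Type*} [Fintype ι] {m u v : (ι →₀ ℕ) → ℝ}

theorem add (hu : IsNonnegHarmonic u) (hv : IsNonnegHarmonic v) : IsNonnegHarmonic (u + v) where
  nonneg α := add_nonneg (hu.nonneg α) (hv.nonneg α)
  sum_add_single α := by
    simp only [Pi.add_apply, Finset.sum_add_distrib, hu.sum_add_single, hv.sum_add_single]

theorem smul (hm : IsNonnegHarmonic m) {c : ℝ} (hc : 0 ≤ c) : IsNonnegHarmonic (c • m) where
  nonneg α := mul_nonneg hc (hm.nonneg α)
  sum_add_single α := by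
    simp only [Pi.smul_apply, ← Finset.smul_sum, hm.sum_add_single]

theorem apply_add_single_le (hm : IsNonnegHarmonic m) (α : ι →₀ ℕ) (i : ι) :
    m (α + Finsupp.single i 1) ≤ m α := by
  rw [← hm.sum_add_single α]
  exact Finset.single_le_sum (f := fun j => m (α + Finsupp.single j 1))
    (fun j _ => hm.nonneg _) (Finset.mem_univ i)

theorem apply_le_apply_zero (hm : IsNonnegHarmonic m) (α : ι →₀ ℕ) : m α ≤ m 0 :=
  finsupp_nat_induction (p := fun α => m α ≤ m 0) le_rfl
    (fun α i hα => (hm.apply_add_single_le α i).trans hα) α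

theorem eq_zero_of_apply_zero (hm : IsNonnegHarmonic m) (h0 : m 0 = 0) : m = 0 :=
  funext fun α => le_antisymm ((hm.apply_le_apply_zero α).trans_eq h0) (hm.nonneg α)

theorem shift (hm : IsNonnegHarmonic m) (i : ι) :
    IsNonnegHarmonic fun α => m (α + Finsupp.single i 1) where
  nonneg _ := hm.nonneg _
  sum_add_single α := by
    simp only [add_right_comm α _ (Finsupp.single i 1), hm.sum_add_single]

theorem sub_shift (hm : IsNonnegHarmonic m) (i : ι) :
    IsNonnegHarmonic fun α => m α - m (α + Finsupp.single i 1) where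
  nonneg α := sub_nonneg.2 (hm.apply_add_single_le α i)
  sum_add_single α := by
    rw [Finset.sum_sub_distrib, hm.sum_add_single, (hm.shift i).sum_add_single]

end IsNonnegHarmonic

/-- The nonnegative harmonic functions with value `1` at the root; they correspond to the
functionals with `L 1 = 1`. -/
def normalizedHarmonic (ι : Type*) [Fintype ι] : Set ((ι →₀ ℕ) → ℝ) :=
  {m | IsNonnegHarmonic m ∧ m 0 = 1}

section NormalizedHarmonic

variable {ι : Type*} [Fintype ι] {m u v : (ι →₀ ℕ) → ℝ}

theorem IsNonnegHarmonic.inv_smul_mem_normalizedHarmonic (hm : IsNonnegHarmonic m)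
    (h0 : m 0 ≠ 0) : (m 0)⁻¹ • m ∈ normalizedHarmonic ι :=
  ⟨hm.smul (inv_nonneg.2 (hm.nonneg 0)), inv_mul_cancel₀ h0⟩

theorem convex_normalizedHarmonic : Convex ℝ (normalizedHarmonic ι) := by
  rintro u ⟨hu, hu0⟩ v ⟨hv, hv0⟩ a b ha hb hab
  exact ⟨(hu.smul ha).add (hv.smul hb), by simp [hu0, hv0, hab]⟩

theorem isCompact_normalizedHarmonic : IsCompact (normalizedHarmonic ι) := by
  have hclosed : IsClosed (normalizedHarmonic ι) := by
    have : normalizedHarmonic ι = {m | (∀ α, 0 ≤ m α) ∧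
        (∀ α, ∑ i, m (α + Finsupp.single i 1) = m α) ∧ m 0 = 1} :=
      Set.ext fun m => ⟨fun h => ⟨h.1.1, h.1.2, h.2⟩, fun h => ⟨⟨h.1, h.2.1⟩, h.2.2⟩⟩
    simp only [this, Set.ofPred_and, Set.ofPred_forall]
    exact (isClosed_iInter fun α => isClosed_le (by fun_prop) (by fun_prop)).inter <|
      (isClosed_iInter fun α => isClosed_eq (by fun_prop) (by fun_prop)).inter <|
      isClosed_eq (by fun_prop) (by fun_prop)
  refine (isCompact_univ_pi fun _ => isCompact_Icc (a := (0 : ℝ)) (b := 1)).of_isClosed_subset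
    hclosed ?_
  rintro m ⟨hm, h0⟩ α -
  exact ⟨hm.nonneg α, h0 ▸ hm.apply_le_apply_zero α⟩

theorem IsNonnegHarmonic.eq_smul_of_add_mem_extremePoints (hu : IsNonnegHarmonic u)
    (hv : IsNonnegHarmonic v) (hext : u + v ∈ (normalizedHarmonic ι).extremePoints ℝ) :
    u = u 0 • (u + v) := by
  have hsum : u 0 + v 0 = 1 := hext.1.2
  by_cases hu0 : u 0 = 0
  · rw [hu0, zero_smul, hu.eq_zero_of_apply_zero hu0]
  by_cases hv0 : v 0 = 0
  · rw [hv.eq_zero_of_apply_zero hv0, add_zero, show u 0 = 1 by linarith, one_smul]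
  have hseg : u + v ∈ openSegment ℝ ((u 0)⁻¹ • u) ((v 0)⁻¹ • v) :=
    ⟨u 0, v 0, (hu.nonneg 0).lt_of_ne' hu0, (hv.nonneg 0).lt_of_ne' hv0, hsum, by
      rw [smul_inv_smul₀ hu0, smul_inv_smul₀ hv0]⟩
  rw [← hext.2 (hu.inv_smul_mem_normalizedHarmonic hu0)
    (hv.inv_smul_mem_normalizedHarmonic hv0) hseg, smul_inv_smul₀ hu0]

theorem apply_add_single_of_mem_extremePoints
    (hm : m ∈ (normalizedHarmonic ι).extremePoints ℝ) (α : ι →₀ ℕ) (i : ι) :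
    m (α + Finsupp.single i 1) = m (Finsupp.single i 1) * m α := by
  have hsplit : (fun α => m (α + Finsupp.single i 1)) +
      (fun α => m α - m (α + Finsupp.single i 1)) = m :=
    funext fun _ => add_sub_cancel _ _
  have hshift := (hm.1.1.shift i).eq_smul_of_add_mem_extremePoints (hm.1.1.sub_shift i)
    (hsplit.symm ▸ hm)
  rw [hsplit, zero_add] at hshift
  exact congrFun hshift α

theorem apply_eq_prod_of_mem_extremePoints
    (hm : m ∈ (normalizedHarmonic ι).extremePoints ℝ) (α : ι →₀ ℕ) :
    m α = α.prod fun i k => m (Finsupp.single i 1) ^ k := by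
  induction α using finsupp_nat_induction with
  | zero => exact hm.1.2
  | add_single α i ih =>
    rw [apply_add_single_of_mem_extremePoints hm, ih,
      Finsupp.prod_add_index' (fun _ => pow_zero _) (fun _ => pow_add _),
      Finsupp.prod_single_index (by simp), pow_one, mul_comm]

theorem apply_single_mem_stdSimplex (hm : m ∈ normalizedHarmonic ι) :
    (fun i => m (Finsupp.single i 1)) ∈ stdSimplex ℝ ι :=
  ⟨fun i => hm.1.nonneg _, by simpa [hm.2] using hm.1.sum_add_single 0⟩

end NormalizedHarmonic

/-- The function `x ↦ x ^ α` on the standard simplex. -/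
noncomputable def simplexMonomial {ι : Type*} [Fintype ι] (α : ι →₀ ℕ) :
    C(stdSimplex ℝ ι, ℝ) where
  toFun x := eval x.1 (monomial α 1)
  continuous_toFun := (MvPolynomial.continuous_eval _).comp continuous_subtype_val

theorem apply_eq_integral_eval_of_monomial {σ X : Type*} [TopologicalSpace X] [CompactSpace X]
    [MeasurableSpace X] [OpensMeasurableSpace X] {μ : Measure X} [IsFiniteMeasure μ]
    {g : X → σ → ℝ} (hg : Continuous g) (L : MvPolynomial σ ℝ →ₗ[ℝ] ℝ)
    (hmon : ∀ α, L (monomial α 1) = ∫ x, eval (g x) (monomial α 1) ∂μ) (f : MvPolynomial σ ℝ) :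
    L f = ∫ x, eval (g x) f ∂μ := by
  have integrable (p : MvPolynomial σ ℝ) : Integrable (fun x => eval (g x) p) μ :=
    ((MvPolynomial.continuous_eval p).comp hg).integrable_of_hasCompactSupport
      (.of_compactSpace _)
  induction f using MvPolynomial.induction_on' with
  | monomial α c =>
    rw [← mul_one c, ← smul_eq_mul, ← smul_monomial, map_smul, hmon]
    simp only [smul_eval, integral_const_mul, smul_eq_mul]
  | add p q hp hq =>
    simp only [map_add, hp, hq, integral_add (integrable p) (integrable q)]

section MomentProblem

variable {ι : Type*} [Fintype ι] {m : (ι →₀ ℕ) → ℝ}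

theorem normalizedHarmonic_subset_momentSet :
    normalizedHarmonic ι ⊆ momentSet (simplexMonomial (ι := ι)) := by
  refine subset_momentSet_of_extremePoints_subset_range _ isCompact_normalizedHarmonic
    convex_normalizedHarmonic fun m hm => ?_
  refine ⟨⟨_, apply_single_mem_stdSimplex hm.1⟩, funext fun α => ?_⟩
  simp [simplexMonomial, eval_monomial, apply_eq_prod_of_mem_extremePoints hm α]

theorem IsNonnegHarmonic.exists_measure_moments_eq (hm : IsNonnegHarmonic m) :
    ∃ μ : Measure (stdSimplex ℝ ι), IsFiniteMeasure μ ∧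
      ∀ α, m α = ∫ x, simplexMonomial α x ∂μ := by
  by_cases h0 : m 0 = 0
  · exact ⟨0, inferInstance, fun α => by simp [hm.eq_zero_of_apply_zero h0]⟩
  obtain ⟨μ, hμ⟩ := normalizedHarmonic_subset_momentSet (hm.inv_smul_mem_normalizedHarmonic h0)
  refine ⟨ENNReal.ofReal (m 0) • (μ : Measure _),
    Measure.smul_finite _ ENNReal.ofReal_ne_top, fun α => ?_⟩
  have hα : ∫ x, simplexMonomial α x ∂μ = (m 0)⁻¹ * m α := congrFun hμ α
  rw [integral_smul_measure, hα, ENNReal.toReal_ofReal (hm.nonneg 0), smul_eq_mul,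
    mul_inv_cancel_left₀ h0]

theorem isNonnegHarmonic_apply_monomial (L : MvPolynomial ι ℝ →ₗ[ℝ] ℝ)
    (hnonneg : ∀ α, 0 ≤ L (monomial α 1)) (hideal : ∀ p, L (p * (1 - ∑ i, X i)) = 0) :
    IsNonnegHarmonic fun α => L (monomial α 1) where
  nonneg := hnonneg
  sum_add_single α := by
    have h := hideal (monomial α 1)
    rw [mul_sub, mul_one, map_sub, sub_eq_zero, Finset.mul_sum, map_sum] at h
    simpa only [X, monomial_mul, mul_one] using h.symm

end MomentProblem

theorem limit_functional_representing_measure_simplex_general {ι : Type*} [Fintype ι]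
    (L : MvPolynomial ι ℝ →ₗ[ℝ] ℝ) (hnonneg : ∀ α, 0 ≤ L (monomial α 1))
    (hideal : ∀ p, L (p * (1 - ∑ i, X i)) = 0) :
    ∃ μ : Measure (ι → ℝ), IsFiniteMeasure μ ∧ μ (stdSimplex ℝ ι)ᶜ = 0 ∧
      μ (stdSimplex ℝ ι) = ENNReal.ofReal (L 1) ∧ ∀ f, L f = ∫ x, eval x f ∂μ := by
  obtain ⟨μ, _, hmon⟩ :=
    (isNonnegHarmonic_apply_monomial L hnonneg hideal).exists_measure_moments_eq
  have hint := apply_eq_integral_eval_of_monomial continuous_subtype_val L hmon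
  have hmeas : MeasurableSet (stdSimplex ℝ ι) := (isClosed_stdSimplex ℝ ι).measurableSet
  refine ⟨μ.map Subtype.val, inferInstance, ?_, ?_, fun f => ?_⟩
  · simp [Measure.map_apply measurable_subtype_coe hmeas.compl]
  · simp [Measure.map_apply measurable_subtype_coe hmeas, hint 1]
  · rw [(MeasurableEmbedding.subtype_coe hmeas).integral_map, hint f]

/-- **Proposition (representing measure on the simplex).**
If a linear functional `L` on the polynomial ring satisfies `L(x^α) ≥ 0` for all `α`,
`L(1) ≤ 1`, and `L(p·(1 - x₁ - ⋯ - xₙ)) = 0` for every polynomial `p`, then there is a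
positive finite Borel measure `μ` supported on the simplex with `μ(Δ_{n-1}) ≤ 1` such
that `L(f) = ∫ f dμ` for every polynomial `f`. -/
theorem limit_functional_representing_measure_simplex
    {n : ℕ} (L : MvPolynomial (Fin n) ℝ →ₗ[ℝ] ℝ)
    (h1 : ∀ α : Fin n →₀ ℕ, 0 ≤ L (monomial α (1 : ℝ)))
    (h2 : L 1 ≤ 1)
    (h3 : ∀ p : MvPolynomial (Fin n) ℝ, L (p * (1 - ∑ i, X i)) = 0)
    (Δ : Set (Fin n → ℝ)) (hΔ : Δ = {x : Fin n → ℝ | (∀ i, 0 ≤ x i) ∧ ∑ i, x i = 1}) :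
    ∃ μ : Measure (Fin n → ℝ), IsFiniteMeasure μ ∧ μ Δᶜ = 0 ∧ μ Δ ≤ 1 ∧
      ∀ f : MvPolynomial (Fin n) ℝ, L f = ∫ x, eval x f ∂μ := by
  obtain ⟨μ, hfin, hcompl, hmass, hint⟩ :=
    limit_functional_representing_measure_simplex_general L h1 h3
  exact hΔ ▸ ⟨μ, hfin, hcompl, hmass.trans_le (ENNReal.ofReal_le_one.2 h2), hint⟩
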